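/- arXiv:2504.17061 — 2 statements merged into one kernel-verified Lean document; each statement's English description precedes it below -/
import Mathlib

section
/- Let ε ≥ 0 and let (X, u₀, {u₁,…,u_N}) be a setting with vN-M utilities. The following are equivalent: (i) the pair (u₀, {u₁,…,u_N}) satisfies Sequential ε-Strong Pareto; (ii) there exists a utilitarian aggregator w ∈ W₊₊ with ‖u₀ − w‖∞ ≤ ε/2. -/
/-- Sequential `ε`-Strong Pareto for the pair `(u₀, {u₁,…,u_N})` on `X`:
(a) there are no `x, y ∈ X` with `u₀(x) < u₀(y) − ε` and `uᵢ(x) ≥ uᵢ(y)` for all `i`;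
(b) there are no sequences `(x_n), (y_n)` in `X` and index `i` with
`uᵢ(x_n) > uᵢ(y_n)` for all `n`,
`liminf (u_j(x_n) − u_j(y_n))/(uᵢ(x_n) − uᵢ(y_n)) ≥ 0` for all `j ≠ i`, and
`liminf (u₀(y_n) − u₀(x_n) − ε)/(uᵢ(x_n) − uᵢ(y_n)) ≥ 0`
(limits inferior taken in the extended reals). -/
def SequentialStrongPareto {E : Type*} {N : ℕ} (X : Set E) (ε : ℝ)
    (u₀ : E → ℝ) (u : Fin N → E → ℝ) : Prop :=
  (¬ ∃ x ∈ X, ∃ y ∈ X, u₀ x < u₀ y - ε ∧ ∀ i, u i y ≤ u i x) ∧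
  (¬ ∃ (xs ys : ℕ → E) (i : Fin N), (∀ n, xs n ∈ X) ∧ (∀ n, ys n ∈ X) ∧
      (∀ n, u i (ys n) < u i (xs n)) ∧
      (∀ j, j ≠ i → (0 : EReal) ≤ Filter.liminf
        (fun n => (((u j (xs n) - u j (ys n)) / (u i (xs n) - u i (ys n)) : ℝ) : EReal))
        Filter.atTop) ∧
      (0 : EReal) ≤ Filter.liminf
        (fun n => (((u₀ (ys n) - u₀ (xs n) - ε) / (u i (xs n) - u i (ys n)) : ℝ) : EReal))
        Filter.atTop)

open Filter
open scoped Pointwise Topology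

/-!
Each pair `(x, y)` in `X` yields a point of `ℝ^N × ℝ`: the individual gains `u i x - u i y`, and the
social loss `u₀ y - u₀ x - ε`. A function has oscillation at most `ε` iff it is within `ε / 2` of a
constant, so the theorem asks when the cone `K` generated by these points lies below a hyperplane
with strictly positive coefficients.

Part (b) of the Pareto condition says that no `(eᵢ, 0)` is a limit of points dominated by `K`.
Separating each of these points from `K` and summing gives a positive functional `f`, nonpositive
on `K` and positive at every `(eᵢ, 0)`, but `f` may vanish on the social coordinate. Since swapping
`x` and `y` makes the projection of `K` to `ℝ^N` a subspace, part (a) and Riesz extension give a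
linear `q` with `t ≤ q v` for all `(v, t) ∈ K`. For large `M`, the functional
`(v, t) ↦ M * f (v, t) + (t - q v)` is nonpositive on `K` with all coefficients positive.
-/

/-- A map that preserves mixtures `l • x + (1 - l) • y` of points of `X`; vN-M utilities are the
real-valued instances. -/
def MixturePreservingOn {E F : Type*} [AddCommGroup E] [Module ℝ E] [AddCommGroup F] [Module ℝ F]
    (X : Set E) (f : E → F) : Prop :=
  ∀ x ∈ X, ∀ y ∈ X, ∀ l : ℝ, 0 ≤ l → l ≤ 1 → f (l • x + (1 - l) • y) = l • f x + (1 - l) • f y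

theorem MixturePreservingOn.convex_image {E F : Type*} [AddCommGroup E] [Module ℝ E]
    [AddCommGroup F] [Module ℝ F] {X : Set E} {f : E → F} (hf : MixturePreservingOn X f)
    (hX : Convex ℝ X) : Convex ℝ (f '' X) := by
  rintro _ ⟨x, hx, rfl⟩ _ ⟨y, hy, rfl⟩ l m hl hm hlm
  obtain rfl : m = 1 - l := by linarith
  exact ⟨_, hX hx hy hl hm hlm, hf x hx y hy l hl (by linarith)⟩

/-- A setting with vN-M utilities: a nonempty convex set of alternatives, a social utility `u₀` and
individual utilities `u i`, all mixture-preserving. Linearity in mixtures is only required on `X`,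
since utilities are total functions on the ambient space. -/
structure IsVNMSetting {E ι : Type*} [AddCommGroup E] [Module ℝ E] (X : Set E) (u₀ : E → ℝ)
    (u : ι → E → ℝ) : Prop where
  nonempty : X.Nonempty
  convex : Convex ℝ X
  social : MixturePreservingOn X u₀
  individual : ∀ i, MixturePreservingOn X (u i)

theorem mem_pointedConeHull_iff_of_convex {F : Type*} [AddCommGroup F] [Module ℝ F] {s : Set F}
    (hs : Convex ℝ s) (hne : s.Nonempty) {z : F} :
    z ∈ PointedCone.hull ℝ s ↔ ∃ l : ℝ, 0 ≤ l ∧ z ∈ l • s := by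
  constructor
  · intro hz
    induction hz using Submodule.span_induction with
    | mem z hz => exact ⟨1, zero_le_one, by rwa [one_smul]⟩
    | zero => exact ⟨0, le_rfl, by simp [Set.zero_smul_set hne]⟩
    | add z w _ _ hz hw =>
      obtain ⟨l, hl, hz⟩ := hz
      obtain ⟨m, hm, hw⟩ := hw
      exact ⟨l + m, add_nonneg hl hm, hs.add_smul hl hm ▸ Set.add_mem_add hz hw⟩
    | smul r z _ hz =>
      obtain ⟨l, hl, hz⟩ := hz
      exact ⟨r * l, mul_nonneg r.2 hl, mul_smul (r : ℝ) l s ▸ Set.smul_mem_smul_set hz⟩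
  · rintro ⟨l, hl, z, hz, rfl⟩
    exact PointedCone.smul_mem _ hl (PointedCone.subset_hull hz)

section SupportingFunctional

variable {V : Type*} [AddCommGroup V] [Module ℝ V] {K : PointedCone ℝ (V × ℝ)}

theorem exists_linearMap_snd_le_of_fst_surj (hsurj : ∀ v, ∃ t, (v, t) ∈ K)
    (hzero : ∀ t, (0, t) ∈ K → t ≤ 0) : ∃ q : V →ₗ[ℝ] ℝ, ∀ k ∈ K, k.2 ≤ q k.1 := by
  let negHeight : V × ℝ →ₗ.[ℝ] ℝ :=
    { domain := LinearMap.ker (LinearMap.fst ℝ V ℝ)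
      toFun := -(LinearMap.snd ℝ V ℝ).comp (Submodule.subtype _) }
  obtain ⟨g, hg_vert, hg_nonneg⟩ := riesz_extension K negHeight
    (by
      rintro ⟨⟨v, t⟩, rfl : v = 0⟩ hk
      exact neg_nonneg.2 (hzero t hk))
    (by
      rintro ⟨v, t⟩
      obtain ⟨s, hs⟩ := hsurj v
      exact ⟨⟨(0, s - t), LinearMap.mem_ker.2 rfl⟩, by simpa using hs⟩)
  refine ⟨g ∘ₗ LinearMap.inl ℝ V ℝ, fun ⟨v, t⟩ hk => ?_⟩
  have hvert : g (0, t) = -t := hg_vert ⟨(0, t), LinearMap.mem_ker.2 rfl⟩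
  have hsplit : g (v, t) = g (v, 0) + g (0, t) := by simp [← map_add]
  have hnonneg := hg_nonneg _ hk
  change t ≤ g (v, 0)
  linarith

theorem exists_linearMap_snd_le_of_fst_symm (hsymm : ∀ k ∈ K, ∃ k' ∈ K, k'.1 = -k.1)
    (hzero : ∀ t, (0, t) ∈ K → t ≤ 0) : ∃ q : V →ₗ[ℝ] ℝ, ∀ k ∈ K, k.2 ≤ q k.1 := by
  let L : Submodule ℝ V := (K.map (LinearMap.fst ℝ V ℝ)).lineal
  obtain ⟨q, hq⟩ := exists_linearMap_snd_le_of_fst_surj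
    (K := K.comap (L.subtype.prodMap LinearMap.id))
    (by
      rintro ⟨v, ⟨k, hk, rfl⟩, -⟩
      exact ⟨k.2, hk⟩)
    hzero
  obtain ⟨Q, hQ⟩ := LinearMap.exists_extend q
  refine ⟨Q, fun k hk => ?_⟩
  have hkL : k.1 ∈ L := ⟨⟨k, hk, rfl⟩, hsymm k hk⟩
  calc k.2 ≤ q ⟨k.1, hkL⟩ := hq (⟨k.1, hkL⟩, k.2) hk
    _ = Q k.1 := (LinearMap.congr_fun hQ ⟨k.1, hkL⟩).symm

end SupportingFunctional

section FreeDisposal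

variable {F : Type*} [AddCommGroup F] [Module ℝ F] [PartialOrder F] [IsOrderedAddMonoid F]
  [PosSMulMono ℝ F] {K : PointedCone ℝ F}

/-- The cone of all vectors dominated by an element of `K` (the comprehensive hull of `K`), which
closes a cone of attainable gains under free disposal. -/
def freeDisposalHull (K : PointedCone ℝ F) : PointedCone ℝ F :=
  K ⊔ -PointedCone.positive ℝ F

theorem mem_freeDisposalHull_iff {z : F} : z ∈ freeDisposalHull K ↔ ∃ k ∈ K, z ≤ k := by
  simp only [freeDisposalHull, Submodule.mem_sup, Submodule.mem_neg, PointedCone.mem_positive]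
  exact ⟨fun ⟨k, hk, p, hp, hz⟩ => ⟨k, hk, hz ▸ add_le_of_nonpos_right (neg_nonneg.1 hp)⟩,
    fun ⟨k, hk, hz⟩ => ⟨k, hk, z - k, by simpa using hz, add_sub_cancel k z⟩⟩

variable [TopologicalSpace F] [IsTopologicalAddGroup F] [ContinuousSMul ℝ F]
  [LocallyConvexSpace ℝ F]

theorem exists_positive_functional_pos_at {e : F} (he : e ∉ (freeDisposalHull K).closure) :
    ∃ f : F →L[ℝ] ℝ, (∀ z, 0 ≤ z → 0 ≤ f z) ∧ (∀ k ∈ K, f k ≤ 0) ∧ 0 < f e := by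
  obtain ⟨f, hf, hfe⟩ := ProperCone.hyperplane_separation_point
    ⟨(freeDisposalHull K).closure, isClosed_closure⟩ he
  have hf_hull (z) (hz : z ∈ freeDisposalHull K) : 0 ≤ f z := hf z (subset_closure hz)
  refine ⟨-f, fun z hz => ?_, fun k hk => ?_, neg_pos.2 hfe⟩
  · simpa using hf_hull (-z) (mem_freeDisposalHull_iff.2 ⟨0, K.zero_mem, neg_nonpos.2 hz⟩)
  · exact neg_nonpos.2 (hf_hull k (mem_freeDisposalHull_iff.2 ⟨k, hk, le_rfl⟩))

theorem exists_positive_functional_forall_pos {ι : Type*} [Finite ι] {e : ι → F}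
    (he_nonneg : ∀ i, 0 ≤ e i) (he : ∀ i, e i ∉ (freeDisposalHull K).closure) :
    ∃ f : F →L[ℝ] ℝ, (∀ z, 0 ≤ z → 0 ≤ f z) ∧ (∀ k ∈ K, f k ≤ 0) ∧ ∀ i, 0 < f (e i) := by
  cases nonempty_fintype ι
  choose f hf_nonneg hf_nonpos hf_pos using fun i => exists_positive_functional_pos_at (he i)
  refine ⟨∑ i, f i, fun z hz => ?_, fun k hk => ?_, fun i => ?_⟩ <;> rw [sum_apply]
  · exact Finset.sum_nonneg fun i _ => hf_nonneg i z hz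
  · exact Finset.sum_nonpos fun i _ => hf_nonpos i k hk
  · exact Finset.sum_pos' (fun j _ => hf_nonneg j _ (he_nonneg i))
      ⟨i, Finset.mem_univ i, hf_pos i⟩

end FreeDisposal

section Weights

variable {ι : Type*} [Fintype ι] [DecidableEq ι] {K : PointedCone ℝ ((ι → ℝ) × ℝ)}

theorem linearMap_apply_eq_sum_add (G : (ι → ℝ) × ℝ →ₗ[ℝ] ℝ) (k : (ι → ℝ) × ℝ) :
    G k = ∑ i, G (Pi.single i 1, 0) * k.1 i + G (0, 1) * k.2 := by
  have hk : k = ∑ i, k.1 i • (Pi.single i 1, 0) + k.2 • (0, 1) := by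
    ext i
    · simp [Prod.fst_sum, Finset.sum_apply, Pi.single_apply]
    · simp [Prod.snd_sum]
  conv_lhs => rw [hk]
  simp only [map_add, map_sum, map_smul, smul_eq_mul, mul_comm]

theorem exists_pos_weights_of_linearMap {G : (ι → ℝ) × ℝ →ₗ[ℝ] ℝ} (hG : ∀ k ∈ K, G k ≤ 0)
    (hfst : ∀ i, 0 < G (Pi.single i 1, 0)) (hsnd : 0 < G (0, 1)) :
    ∃ a : ι → ℝ, (∀ i, 0 < a i) ∧ ∀ k ∈ K, ∑ i, a i * k.1 i + k.2 ≤ 0 := by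
  refine ⟨fun i => G (Pi.single i 1, 0) / G (0, 1), fun i => div_pos (hfst i) hsnd,
    fun k hk => ?_⟩
  have hnormalized : ∑ i, G (Pi.single i 1, 0) / G (0, 1) * k.1 i + k.2 = G k / G (0, 1) := by
    rw [linearMap_apply_eq_sum_add G k, add_div, Finset.sum_div, mul_div_cancel_left₀ _ hsnd.ne']
    simp only [div_mul_eq_mul_div]
  exact hnormalized.trans_le (div_nonpos_of_nonpos_of_nonneg (hG k hk) hsnd.le)

theorem exists_pos_weights_of_single_notMem_closure (hsymm : ∀ k ∈ K, ∃ k' ∈ K, k'.1 = -k.1)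
    (hzero : ∀ t, (0, t) ∈ K → t ≤ 0)
    (hclosure : ∀ i, (Pi.single i 1, 0) ∉ (freeDisposalHull K).closure) :
    ∃ a : ι → ℝ, (∀ i, 0 < a i) ∧ ∀ k ∈ K, ∑ i, a i * k.1 i + k.2 ≤ 0 := by
  obtain ⟨q, hq⟩ := exists_linearMap_snd_le_of_fst_symm hsymm hzero
  obtain ⟨f, hf_nonneg, hf_nonpos, hf_pos⟩ := exists_positive_functional_forall_pos
    (fun i => Prod.mk_le_mk.2 ⟨Pi.single_nonneg.2 zero_le_one, le_rfl⟩) hclosure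
  obtain ⟨M, hM, hM_nonneg⟩ :
      ∃ M : ℝ, (∀ i, q (Pi.single i 1) < M * f (Pi.single i 1, 0)) ∧ 0 ≤ M :=
    ((eventually_all.2 fun i => (tendsto_id.atTop_mul_const (hf_pos i)).eventually_gt_atTop _).and
      (eventually_ge_atTop 0)).exists
  let G : (ι → ℝ) × ℝ →ₗ[ℝ] ℝ :=
    M • f.toLinearMap + (LinearMap.snd ℝ _ ℝ - q ∘ₗ LinearMap.fst ℝ _ ℝ)
  have hG (k) : G k = M * f k + (k.2 - q k.1) := rfl
  refine exists_pos_weights_of_linearMap (G := G) (fun k hk => ?_) (fun i => ?_) ?_ <;> rw [hG]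
  · have := mul_nonpos_of_nonneg_of_nonpos hM_nonneg (hf_nonpos k hk)
    linarith [hq k hk]
  · linarith [hM i]
  · have := mul_nonneg hM_nonneg (hf_nonneg (0, 1) ⟨le_rfl, zero_le_one⟩)
    simpa using by linarith

end Weights

section Liminf

variable {α : Type*} {l : Filter α} {f : α → ℝ}

theorem zero_le_liminf_coe_iff :
    (0 : EReal) ≤ liminf (fun n => (f n : EReal)) l ↔ ∀ η > 0, ∀ᶠ n in l, -η < f n := by
  rw [le_liminf_iff]
  constructor
  · intro h η hη
    exact_mod_cast h (-η : ℝ) (by exact_mod_cast neg_lt_zero.2 hη)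
  · intro h y hy
    obtain ⟨r, hyr, hr⟩ := EReal.lt_iff_exists_real_btwn.1 hy
    filter_upwards [h (-r) (neg_pos.2 (by exact_mod_cast hr))] with n hn
    exact hyr.trans (by simpa using hn)

theorem min_zero_div_le_div {t w d y z : ℝ} (ht : 0 ≤ t) (hy : 0 < y) (hyd : y ≤ t * d)
    (hzw : z ≤ t * w) : min z 0 / y ≤ w / d := by
  have ht_pos : 0 < t := ht.lt_of_ne fun h => by simp [← h] at hyd; linarith
  calc min z 0 / y ≤ min z 0 / (t * d) := by
        rw [div_le_div_iff₀ hy (hy.trans_le hyd)]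
        exact mul_le_mul_of_nonpos_left hyd (min_le_right z 0)
    _ ≤ t * w / (t * d) := by
        have := hy.trans_le hyd
        gcongr
        exact (min_le_left z 0).trans hzw
    _ = w / d := mul_div_mul_left w d ht_pos.ne'

theorem zero_le_liminf_div {t w d y z : α → ℝ} (ht : ∀ n, 0 ≤ t n) (hy : ∀ n, 0 < y n)
    (hyd : ∀ n, y n ≤ t n * d n) (hzw : ∀ n, z n ≤ t n * w n) (hy_lim : Tendsto y l (𝓝 1))
    (hz_lim : Tendsto z l (𝓝 0)) :
    (0 : EReal) ≤ liminf (fun n => ((w n / d n : ℝ) : EReal)) l := by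
  have hlim : Tendsto (fun n => min (z n) 0 / y n) l (𝓝 0) := by
    simpa only [min_self, zero_div] using!
      (hz_lim.min (tendsto_const_nhds (x := (0 : ℝ)))).div hy_lim one_ne_zero
  refine zero_le_liminf_coe_iff.2 fun η hη => ?_
  filter_upwards [hlim.eventually_const_lt (neg_lt_zero.2 hη)] with n hn
  exact hn.trans_le (min_zero_div_le_div (ht n) (hy n) (hyd n) (hzw n))

end Liminf

section MidrangeApproximation

variable {α : Type*} {s : Set α} {ε : ℝ}

theorem exists_forall_abs_sub_le_half_iff {h : α → ℝ} :
    (∃ b, ∀ x ∈ s, |h x - b| ≤ ε / 2) ↔ ∀ x ∈ s, ∀ y ∈ s, h y - h x ≤ ε := by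
  constructor
  · rintro ⟨b, hb⟩ x hx y hy
    linarith [(abs_le.1 (hb x hx)).1, (abs_le.1 (hb y hy)).2]
  · intro hosc
    refine ⟨sSup (h '' s) - ε / 2, fun x hx => ?_⟩
    have hub : h x + ε ∈ upperBounds (h '' s) := by
      rintro _ ⟨y, hy, rfl⟩
      linarith [hosc x hx y hy]
    have hle_sup : h x ≤ sSup (h '' s) := le_csSup ⟨_, hub⟩ ⟨x, hx, rfl⟩
    have hsup_le : sSup (h '' s) ≤ h x + ε := csSup_le ⟨_, x, hx, rfl⟩ hub
    rw [abs_le]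
    constructor <;> linarith

theorem exists_forall_abs_sub_weightedSum_le_iff {ι : Type*} [Fintype ι] {u₀ : α → ℝ}
    {u : ι → α → ℝ} {a : ι → ℝ} :
    (∃ b, ∀ x ∈ s, |u₀ x - ((∑ i, a i * u i x) + b)| ≤ ε / 2) ↔
      ∀ x ∈ s, ∀ y ∈ s, ∑ i, a i * (u i x - u i y) + (u₀ y - u₀ x - ε) ≤ 0 := by
  simp only [← sub_sub, exists_forall_abs_sub_le_half_iff (h := fun x => u₀ x - ∑ i, a i * u i x)]
  refine forall₂_congr fun x _ => forall₂_congr fun y _ => ?_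
  rw [← sub_nonpos]
  simp only [mul_sub, Finset.sum_sub_distrib]
  ring_nf

end MidrangeApproximation

theorem exists_pos_forall_sum_mul_add_pos {ι : Type*} [Fintype ι] {a : ι → ℝ}
    (ha : ∀ i, 0 < a i) (i : ι) :
    ∃ η > 0, ∀ (r : ι → ℝ) (s : ℝ), r i = 1 → (∀ j, j ≠ i → -η < r j) → -η < s →
      0 < ∑ j, a j * r j + s := by
  have hsum : 0 < 1 + ∑ j, a j :=
    add_pos_of_pos_of_nonneg one_pos (Finset.sum_nonneg fun j _ => (ha j).le)
  set η := a i / (1 + ∑ j, a j) with hη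
  have hη_pos : 0 < η := div_pos (ha i) hsum
  refine ⟨η, hη_pos, fun r s hri hr hs => ?_⟩
  have hterm (j) : 0 ≤ a j * (r j + η) := by
    refine mul_nonneg (ha j).le ?_
    rcases eq_or_ne j i with rfl | hj
    · linarith
    · linarith [hr j hj]
  have hη_sum : η * (1 + ∑ j, a j) = a i := div_mul_cancel₀ _ hsum.ne'
  have hsingle : a i * (r i + η) ≤ ∑ j, a j * (r j + η) :=
    Finset.single_le_sum (fun j _ => hterm j) (Finset.mem_univ i)
  simp only [mul_add, Finset.sum_add_distrib, ← Finset.sum_mul, hri] at hsingle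
  have := mul_pos (ha i) hη_pos
  linarith

section UtilityGap

variable {E ι : Type*} {X : Set E} {ε : ℝ} {u₀ : E → ℝ} {u : ι → E → ℝ}

/-- The vector of individual gains from moving `y` to `x`, together with the social loss in excess
of the tolerance `ε`, for a pair `p = (x, y)`. -/
def utilityGap (ε : ℝ) (u₀ : E → ℝ) (u : ι → E → ℝ) (p : E × E) : (ι → ℝ) × ℝ :=
  (fun i => u i p.1 - u i p.2, u₀ p.2 - u₀ p.1 - ε)

/-- The convex cone generated by the utility gaps of all pairs of points of `X`. -/
def gapCone (X : Set E) (ε : ℝ) (u₀ : E → ℝ) (u : ι → E → ℝ) : PointedCone ℝ ((ι → ℝ) × ℝ) :=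
  PointedCone.hull ℝ (utilityGap ε u₀ u '' (X ×ˢ X))

theorem utilityGap_mem_gapCone {x y : E} (hx : x ∈ X) (hy : y ∈ X) :
    utilityGap ε u₀ u (x, y) ∈ gapCone X ε u₀ u :=
  PointedCone.subset_hull ⟨(x, y), ⟨hx, hy⟩, rfl⟩

variable [AddCommGroup E] [Module ℝ E]

theorem mixturePreservingOn_utilityGap (hu₀ : MixturePreservingOn X u₀)
    (hu : ∀ i, MixturePreservingOn X (u i)) :
    MixturePreservingOn (X ×ˢ X) (utilityGap ε u₀ u) := by
  rintro ⟨x, y⟩ ⟨hx, hy⟩ ⟨x', y'⟩ ⟨hx', hy'⟩ l hl hl1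
  ext i
  · simp only [utilityGap, Prod.fst_add, Prod.smul_fst, Prod.snd_add, Prod.smul_snd,
      Pi.add_apply, Pi.smul_apply, smul_eq_mul, hu i x hx x' hx' l hl hl1,
      hu i y hy y' hy' l hl hl1]
    ring
  · simp only [utilityGap, Prod.fst_add, Prod.smul_fst, Prod.snd_add, Prod.smul_snd,
      smul_eq_mul, hu₀ x hx x' hx' l hl hl1, hu₀ y hy y' hy' l hl hl1]
    ring

theorem IsVNMSetting.convex_utilityGap_image (hS : IsVNMSetting X u₀ u) :
    Convex ℝ (utilityGap ε u₀ u '' (X ×ˢ X)) :=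
  (mixturePreservingOn_utilityGap hS.social hS.individual).convex_image (hS.convex.prod hS.convex)

theorem exists_of_mem_gapCone (hS : IsVNMSetting X u₀ u) {k : (ι → ℝ) × ℝ}
    (hk : k ∈ gapCone X ε u₀ u) :
    ∃ t : ℝ, 0 ≤ t ∧ ∃ x ∈ X, ∃ y ∈ X, k = t • utilityGap ε u₀ u (x, y) := by
  obtain ⟨t, ht, _, ⟨⟨x, y⟩, ⟨hx, hy⟩, rfl⟩, rfl⟩ := (mem_pointedConeHull_iff_of_convex
    hS.convex_utilityGap_image ((hS.nonempty.prod hS.nonempty).image _)).1 hk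
  exact ⟨t, ht, x, hx, y, hy, rfl⟩

theorem exists_mem_gapCone_fst_eq_neg (hS : IsVNMSetting X u₀ u) {k : (ι → ℝ) × ℝ}
    (hk : k ∈ gapCone X ε u₀ u) : ∃ k' ∈ gapCone X ε u₀ u, k'.1 = -k.1 := by
  obtain ⟨t, ht, x, hx, y, hy, rfl⟩ := exists_of_mem_gapCone hS hk
  refine ⟨t • utilityGap ε u₀ u (y, x),
    PointedCone.smul_mem _ ht (utilityGap_mem_gapCone hy hx), ?_⟩
  ext i
  change t * (u i y - u i x) = -(t * (u i x - u i y))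
  ring

end UtilityGap

section Aggregation

variable {E : Type*} {N : ℕ} {X : Set E} {ε : ℝ} {u₀ : E → ℝ} {u : Fin N → E → ℝ}

theorem sequentialStrongPareto_of_pos_weights {a : Fin N → ℝ} (ha : ∀ i, 0 < a i)
    (hle : ∀ x ∈ X, ∀ y ∈ X, ∑ i, a i * (u i x - u i y) + (u₀ y - u₀ x - ε) ≤ 0) :
    SequentialStrongPareto X ε u₀ u := by
  constructor
  · rintro ⟨x, hx, y, hy, hlt, hge⟩
    have hgain : 0 ≤ ∑ i, a i * (u i x - u i y) :=
      Finset.sum_nonneg fun i _ => mul_nonneg (ha i).le (sub_nonneg.2 (hge i))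
    linarith [hle x hx y hy]
  · rintro ⟨x, y, i, hx, hy, hlt, hliminf, hliminf₀⟩
    obtain ⟨η, hη, hpos⟩ := exists_pos_forall_sum_mul_add_pos ha i
    have hratio : ∀ᶠ n in atTop, ∀ j, j ≠ i →
        -η < (u j (x n) - u j (y n)) / (u i (x n) - u i (y n)) :=
      eventually_all.2 fun j => eventually_imp_distrib_left.2 fun hj =>
        zero_le_liminf_coe_iff.1 (hliminf j hj) η hη
    obtain ⟨n, hn, hn₀⟩ := (hratio.and (zero_le_liminf_coe_iff.1 hliminf₀ η hη)).exists
    have hgain : 0 < u i (x n) - u i (y n) := sub_pos.2 (hlt n)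
    refine (hpos _ _ (div_self hgain.ne') hn hn₀).not_ge ?_
    simp only [← mul_div_assoc, ← Finset.sum_div, ← add_div]
    exact div_nonpos_of_nonpos_of_nonneg (hle _ (hx n) _ (hy n)) hgain.le

variable [AddCommGroup E] [Module ℝ E]

theorem SequentialStrongPareto.snd_nonpos (h : SequentialStrongPareto X ε u₀ u)
    (hS : IsVNMSetting X u₀ u) {s : ℝ} (hs : (0, s) ∈ gapCone X ε u₀ u) : s ≤ 0 := by
  obtain ⟨t, ht, x, hx, y, hy, hk⟩ := exists_of_mem_gapCone hS hs
  have hgain (i) : 0 = t * (u i x - u i y) := congrFun (congrArg Prod.fst hk) i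
  have hloss : s = t * (u₀ y - u₀ x - ε) := congrArg Prod.snd hk
  by_contra! hs_pos
  have ht_pos : 0 < t := ht.lt_of_ne (by rintro rfl; simp [hloss] at hs_pos)
  have hloss_pos : 0 < u₀ y - u₀ x - ε := pos_of_mul_pos_right (hloss ▸ hs_pos) ht
  refine h.1 ⟨x, hx, y, hy, by linarith, fun i => (sub_eq_zero.1 ?_).ge⟩
  exact (mul_eq_zero.1 (hgain i).symm).resolve_left ht_pos.ne'

theorem SequentialStrongPareto.single_notMem_closure (h : SequentialStrongPareto X ε u₀ u)
    (hS : IsVNMSetting X u₀ u) (i : Fin N) :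
    (Pi.single i 1, 0) ∉ (freeDisposalHull (gapCone X ε u₀ u)).closure := by
  intro hmem
  have hmem_pos : (Pi.single i 1, 0) ∈ closure
      ({z : (Fin N → ℝ) × ℝ | 0 < z.1 i} ∩ freeDisposalHull (gapCone X ε u₀ u)) :=
    (isOpen_lt continuous_const (by fun_prop)).inter_closure ⟨by simp, hmem⟩
  obtain ⟨z, hz, hz_lim⟩ := mem_closure_iff_seq_limit.1 hmem_pos
  have hdom (n) : ∃ t : ℝ, 0 ≤ t ∧ ∃ x ∈ X, ∃ y ∈ X, z n ≤ t • utilityGap ε u₀ u (x, y) := by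
    obtain ⟨k, hk, hzk⟩ := mem_freeDisposalHull_iff.1 (hz n).2
    obtain ⟨t, ht, x, hx, y, hy, rfl⟩ := exists_of_mem_gapCone hS hk
    exact ⟨t, ht, x, hx, y, hy, hzk⟩
  choose t ht x hx y hy hle using hdom
  have hgain (j n) : (z n).1 j ≤ t n * (u j (x n) - u j (y n)) := (hle n).1 j
  have hloss (n) : (z n).2 ≤ t n * (u₀ (y n) - u₀ (x n) - ε) := (hle n).2
  have hgain_pos (n) : 0 < u i (x n) - u i (y n) :=
    pos_of_mul_pos_right ((hz n).1.trans_le (hgain i n)) (ht n)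
  have hgain_lim (j) : Tendsto (fun n => (z n).1 j) atTop (𝓝 ((Pi.single i 1 : Fin N → ℝ) j)) :=
    tendsto_pi_nhds.1 hz_lim.fst_nhds j
  have hgain_lim_self : Tendsto (fun n => (z n).1 i) atTop (𝓝 1) := by
    simpa using hgain_lim i
  refine h.2 ⟨x, y, i, hx, hy, fun n => sub_pos.1 (hgain_pos n), fun j hj => ?_, ?_⟩
  · exact zero_le_liminf_div ht (fun n => (hz n).1) (hgain i) (hgain j) hgain_lim_self
      (by simpa [hj] using hgain_lim j)
  · exact zero_le_liminf_div ht (fun n => (hz n).1) (hgain i) hloss hgain_lim_self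
      hz_lim.snd_nhds

theorem SequentialStrongPareto.exists_pos_weights (h : SequentialStrongPareto X ε u₀ u)
    (hS : IsVNMSetting X u₀ u) :
    ∃ a : Fin N → ℝ, (∀ i, 0 < a i) ∧
      ∀ x ∈ X, ∀ y ∈ X, ∑ i, a i * (u i x - u i y) + (u₀ y - u₀ x - ε) ≤ 0 := by
  obtain ⟨a, ha, hle⟩ := exists_pos_weights_of_single_notMem_closure
    (fun _ hk => exists_mem_gapCone_fst_eq_neg hS hk)
    (fun _ hs => h.snd_nonpos hS hs) (h.single_notMem_closure hS)
  exact ⟨a, ha, fun x hx y hy => hle _ (utilityGap_mem_gapCone hx hy)⟩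

end Aggregation

/-- Theorem: aggregation with Sequential `ε`-Strong Pareto.
Let `ε ≥ 0` and let `(X, u₀, {u₁,…,u_N})` be a setting with vN-M utilities.  Then
Sequential `ε`-Strong Pareto holds iff there is a utilitarian aggregator
`w = Σᵢ aᵢ uᵢ + b` with all `aᵢ > 0` and `‖u₀ − w‖∞ ≤ ε/2`. -/
theorem stmt9 {E : Type*} [AddCommGroup E] [Module ℝ E]
    {N : ℕ} (hN : 1 ≤ N) {ε : ℝ} (hε : 0 ≤ ε)
    (X : Set E) (hXne : X.Nonempty) (hXconv : Convex ℝ X)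
    (u₀ : E → ℝ) (u : Fin N → E → ℝ)
    (haff₀ : ∀ x ∈ X, ∀ y ∈ X, ∀ l : ℝ, 0 ≤ l → l ≤ 1 →
      u₀ (l • x + (1 - l) • y) = l * u₀ x + (1 - l) * u₀ y)
    (haff : ∀ i : Fin N, ∀ x ∈ X, ∀ y ∈ X, ∀ l : ℝ, 0 ≤ l → l ≤ 1 →
      u i (l • x + (1 - l) • y) = l * u i x + (1 - l) * u i y) :
    SequentialStrongPareto X ε u₀ u ↔
      (∃ (a : Fin N → ℝ) (b : ℝ), (∀ i, 0 < a i) ∧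
        ∀ x ∈ X, |u₀ x - ((∑ i, a i * u i x) + b)| ≤ ε / 2) := by
  constructor
  · intro hPareto
    obtain ⟨a, ha, hle⟩ := hPareto.exists_pos_weights ⟨hXne, hXconv, haff₀, haff⟩
    obtain ⟨b, hb⟩ := exists_forall_abs_sub_weightedSum_le_iff.2 hle
    exact ⟨a, b, ha, hb⟩
  · rintro ⟨a, b, ha, hb⟩
    exact sequentialStrongPareto_of_pos_weights ha
      (exists_forall_abs_sub_weightedSum_le_iff.1 ⟨b, hb⟩)
end

section
/- Let ε₁ ≥ 0 and ε₂ ∈ [0,1]. Let (S, Σ_S) be a measurable space, let P₀, P₁, …, P_N be nonatomic probability measures on (S, Σ_S), let C be a nonempty set, let v₀, v₁, …, v_N : C → ℝ, and assume there exist c*, c_* ∈ C with v_j(c*) > v_j(c_*) for every j = 0, 1, …, N. For a finitely supported lottery p on C set U_j(p) = Σ_{c∈C} p(c) v_j(c), and let Σ_u = {E ∈ Σ_S : P₀(E) = P_i(E) for all i = 1,…,N}. Then the following are equivalent: (i) [ε₁-Lottery Pareto] for all finitely supported lotteries p, q on C, U_i(p) ≥ U_i(q) for all i = 1,…,N implies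 U₀(p) ≥ U₀(q) − ε₁; and [(ε₂/2)-Likelihood Dominance] for all E ∈ Σ_S and F ∈ Σ_u, P_i(E) ≥ P_i(F) for all i = 1,…,N implies P₀(E) ≥ P₀(F) − ε₂/2; (ii) there exist real numbers a₁, …, a_N ≥ 0 and b, and λ₁, …, λ_N ≥ 0 with Σ_{i=1}^N λ_i = 1, such that the function r : C → ℝ defined by r(c) = v₀(c) − Σ_{i=1}^N a_i v_i(c) − b satisfies sup_{c∈C} |r(c)| ≤ ε₁/2, and the signed measure R = P₀ − Σ_{i=1}^N λ_i P_i satisfies ‖R‖₁ ≤ ε₂. -/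
open MeasureTheory

/-- A measure is nonatomic when every set of positive measure has a measurable subset
of strictly smaller positive measure. -/
def Nonatomic {S : Type*} [MeasurableSpace S] (μ : Measure S) : Prop :=
  ∀ E : Set S, MeasurableSet E → 0 < μ E →
    ∃ F : Set S, F ⊆ E ∧ MeasurableSet F ∧ 0 < μ F ∧ μ F < μ E

/-- `p : C →₀ ℝ` is a finitely supported lottery: nonnegative values summing to `1`. -/
def IsLottery {C : Type*} (p : C →₀ ℝ) : Prop :=
  (∀ c, 0 ≤ p c) ∧ p.sum (fun _ t => t) = 1

/-- Expected utility of a finitely supported lottery `p` under a utility `v : C → ℝ`. -/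
def lotteryEU {C : Type*} (v : C → ℝ) (p : C →₀ ℝ) : ℝ :=
  p.sum fun c t => t * v c

/-!
Tastes and beliefs are aggregated by separate duality arguments.

For tastes, the expected utility differences `(U₀ q - U₀ p, U p - U q)` form a convex set, which
Lottery Pareto keeps away from `(ε₁, ∞) × (0, ∞)ᴺ`. A separating functional gives the weights `aᵢ`;
the coefficient of `U₀` does not vanish because the unanimous ranking of two outcomes is a Slater
point. Then `v₀ - ∑ aᵢ vᵢ` oscillates by at most `ε₁`, and `b` is its midrange.

For beliefs, the range of a finite family of nonatomic measures is convex (Lyapunov). Indeed let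
`ν` be their sum and `0 ≤ g ≤ 1`. The functions with values in `[0, 1]` that have the same
integrals as `g` form a weakly compact convex subset of `L²(ν)`, so there is an extreme one.
It is an indicator: otherwise it is in `[δ, 1 - δ]` on some set of positive measure, which carries
a nonzero bounded function with vanishing integrals, of which small multiples can be added and
subtracted.
For any event `E` convexity yields an event `F` of probability `min Pᵢ E` under all beliefs, so
Likelihood Dominance says `minᵢ (Pᵢ E - P₀ E) ≤ ε₂ / 2`. The vectors `(Pᵢ E - P₀ E)ᵢ` form a convex
set, and separating it from an orthant gives weights `λ` with `∑ λᵢ Pᵢ E - P₀ E ≤ ε₂ / 2` for all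
`E`. As `R = P₀ - ∑ λᵢ Pᵢ` has total mass zero, `‖R‖₁ = -2 inf R`, so this says `‖R‖₁ ≤ ε₂`.
-/

section Separation

variable {ι : Type*} [Fintype ι]

theorem nonpos_of_forall_add_mul_le {𝕜 : Type*} [Field 𝕜] [LinearOrder 𝕜] [IsStrictOrderedRing 𝕜]
    {a b u : 𝕜} (h : ∀ s, 0 ≤ s → a + s * b ≤ u) : b ≤ 0 := by
  by_contra! hb
  have hau : a ≤ u := by simpa using h 0 le_rfl
  have hs := h ((u - a + 1) / b) (by positivity [sub_nonneg.2 hau])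
  rw [div_mul_cancel₀ _ hb.ne'] at hs
  linarith

theorem exists_nonneg_sum_pos_forall_sum_le {K : Set (ι → ℝ)} (hK : Convex ℝ K)
    (hne : K.Nonempty) (t : ι → ℝ) (h : ∀ x ∈ K, ∃ i, x i ≤ t i) :
    ∃ z : ι → ℝ, (∀ i, 0 ≤ z i) ∧ 0 < ∑ i, z i ∧ ∀ x ∈ K, ∑ i, z i * x i ≤ ∑ i, z i * t i := by
  classical
  obtain ⟨x₀, hx₀⟩ := hne
  let D : Set (ι → ℝ) := Set.univ.pi fun i ↦ Set.Ioi (t i)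
  have hdisj : Disjoint D K := Set.disjoint_left.2 fun x hxD hxK ↦
    let ⟨i, hi⟩ := h x hxK
    hi.not_gt (hxD i trivial)
  obtain ⟨f, u, hfD, hfK⟩ := geometric_hahn_banach_open (convex_pi fun i _ ↦ convex_Ioi (t i))
    (isOpen_set_pi Set.finite_univ fun i _ ↦ isOpen_Ioi) hK hdisj
  let z : ι → ℝ := fun i ↦ -f (Pi.single i 1)
  have hf (x : ι → ℝ) : f x = -∑ i, z i * x i := by
    conv_lhs => rw [← (Pi.basisFun ℝ ι).sum_repr x]
    simp [z, mul_comm]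
  have ht₁ : t + 1 ∈ D := fun i _ ↦ by simp
  have hft₁ : f (t + 1) < u := hfD _ ht₁
  have hz (i : ι) : 0 ≤ z i := by
    refine neg_nonneg.2 (nonpos_of_forall_add_mul_le (a := f (t + 1)) (u := u) fun s hs ↦ ?_)
    have hnonneg : 0 ≤ s • (Pi.single i 1 : ι → ℝ) :=
      smul_nonneg hs (Pi.single_nonneg.2 zero_le_one)
    have hmem : t + 1 + s • Pi.single i 1 ∈ D := fun j _ ↦
      (ht₁ j trivial).trans_le (le_add_of_nonneg_right (hnonneg j))
    simpa using (hfD _ hmem).le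
  have hft : f t ≤ u := by
    have htD : t ∈ closure D := by
      rw [closure_pi_set]
      exact fun i _ ↦ by simp
    exact closure_minimal (fun x hx ↦ (hfD x hx).le) (isClosed_le f.continuous continuous_const) htD
  refine ⟨z, hz, (Finset.sum_nonneg fun i _ ↦ hz i).lt_of_ne' fun h0 ↦ ?_, fun x hx ↦ ?_⟩
  · have hz0 (i : ι) : z i = 0 :=
      (Finset.sum_eq_zero_iff_of_nonneg fun i _ ↦ hz i).1 h0 i (Finset.mem_univ i)
    have hf0 (x : ι → ℝ) : f x = 0 := by simp [hf, hz0]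
    exact absurd (hft₁.trans_le (hfK x₀ hx₀)) (by simp [hf0])
  · linarith [hf x, hf t, hfK x hx]

theorem exists_mem_stdSimplex_forall_sum_le [Nonempty ι] {K : Set (ι → ℝ)} (hK : Convex ℝ K)
    (t : ι → ℝ) (h : ∀ x ∈ K, ∃ i, x i ≤ t i) :
    ∃ w ∈ stdSimplex ℝ ι, ∀ x ∈ K, ∑ i, w i * x i ≤ ∑ i, w i * t i := by
  classical
  rcases K.eq_empty_or_nonempty with rfl | hne
  · exact ⟨_, single_mem_stdSimplex ℝ (Classical.arbitrary ι), by simp⟩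
  obtain ⟨z, hz, hsum, hzK⟩ := exists_nonneg_sum_pos_forall_sum_le hK hne t h
  refine ⟨fun i ↦ z i / ∑ j, z j, ⟨fun i ↦ div_nonneg (hz i) hsum.le, ?_⟩, fun x hx ↦ ?_⟩
  · rw [← Finset.sum_div, div_self hsum.ne']
  · simp only [div_mul_eq_mul_div, ← Finset.sum_div]
    exact div_le_div_of_nonneg_right (hzK x hx) hsum.le

theorem exists_nonneg_forall_add_sum_le {K : Set (ℝ × (ι → ℝ))} (hK : Convex ℝ K) {ε : ℝ}
    (hslater : ∃ x ∈ K, ∀ i, 0 < x.2 i) (h : ∀ x ∈ K, (∀ i, 0 ≤ x.2 i) → x.1 ≤ ε) :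
    ∃ a : ι → ℝ, (∀ i, 0 ≤ a i) ∧ ∀ x ∈ K, x.1 + ∑ i, a i * x.2 i ≤ ε := by
  let J : ℝ × (ι → ℝ) →ₗ[ℝ] Option ι → ℝ := LinearMap.pi fun o ↦
    o.elim (LinearMap.fst ℝ ℝ (ι → ℝ)) fun i ↦ LinearMap.proj i ∘ₗ LinearMap.snd ℝ ℝ (ι → ℝ)
  obtain ⟨w, ⟨hw0, hw1⟩, hw⟩ := exists_mem_stdSimplex_forall_sum_le (hK.linear_image J)
    (fun o ↦ o.elim ε 0) <| by
      rintro _ ⟨x, hx, rfl⟩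
      by_contra! hlt
      exact (hlt none).not_ge (h x hx fun i ↦ (hlt (some i)).le)
  replace hw (x) (hx : x ∈ K) : w none * x.1 + ∑ i, w (some i) * x.2 i ≤ w none * ε := by
    simpa [J, Fintype.sum_option] using hw _ ⟨x, hx, rfl⟩
  have hpos : 0 < w none := by
    refine (hw0 none).lt_of_ne' fun h0 ↦ ?_
    obtain ⟨x, hx, hx0⟩ := hslater
    have hterm (i : ι) : 0 ≤ w (some i) * x.2 i := mul_nonneg (hw0 _) (hx0 i).le
    have hle : ∑ i, w (some i) * x.2 i ≤ 0 := by simpa [h0] using hw x hx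
    have hsum : ∑ i, w (some i) * x.2 i = 0 := hle.antisymm (Finset.sum_nonneg fun i _ ↦ hterm i)
    have hzero (i : ι) : w (some i) = 0 :=
      (mul_eq_zero.1 <| (Finset.sum_eq_zero_iff_of_nonneg fun i _ ↦ hterm i).1 hsum i
        (Finset.mem_univ i)).resolve_right (hx0 i).ne'
    simp [Fintype.sum_option, h0, hzero] at hw1
  refine ⟨fun i ↦ w (some i) / w none, fun i ↦ div_nonneg (hw0 _) hpos.le, fun x hx ↦ ?_⟩
  calc x.1 + ∑ i, w (some i) / w none * x.2 i
      = (w none * x.1 + ∑ i, w (some i) * x.2 i) / w none := by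
        simp only [add_div, mul_div_cancel_left₀ _ hpos.ne', Finset.sum_div, div_mul_eq_mul_div]
    _ ≤ ε := (div_le_iff₀' hpos).2 (hw x hx)

theorem exists_forall_abs_sub_le_iff {C : Type*} {r : C → ℝ} {ε : ℝ} :
    (∃ b, ∀ c, |r c - b| ≤ ε / 2) ↔ ∀ c d, r c - r d ≤ ε := by
  refine ⟨fun ⟨b, hb⟩ c d ↦ ?_, fun h ↦ ⟨(⨅ c, r c) + ε / 2, fun c ↦ ?_⟩⟩
  · linarith [(abs_le.1 (hb c)).2, (abs_le.1 (hb d)).1]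
  · have : Nonempty C := ⟨c⟩
    have hbdd : BddBelow (Set.range r) :=
      ⟨r c - ε, Set.forall_mem_range.2 fun d ↦ sub_le_comm.1 (h c d)⟩
    have hle : (⨅ d, r d) ≤ r c := ciInf_le hbdd c
    have hge : r c - ε ≤ ⨅ d, r d := le_ciInf fun d ↦ sub_le_comm.1 (h c d)
    exact abs_le.2 ⟨by linarith, by linarith⟩

end Separation

section Lotteries

variable {C ι : Type*}

open scoped Pointwise

/-- The `ε`-Lottery Pareto condition between a social utility `v₀` and the individual utilities
`v i`: unanimous weak preference among lotteries is respected by `v₀` up to a loss of `ε`. -/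
def LotteryPareto (ε : ℝ) (v₀ : C → ℝ) (v : ι → C → ℝ) : Prop :=
  ∀ p q : C →₀ ℝ, IsLottery p → IsLottery q → (∀ i, lotteryEU (v i) q ≤ lotteryEU (v i) p) →
    lotteryEU v₀ q - ε ≤ lotteryEU v₀ p

theorem lotteryEU_eq_bilinearCombination (v : C → ℝ) (p : C →₀ ℝ) :
    lotteryEU v p = Finsupp.bilinearCombination ℝ ℝ v p := rfl

theorem lotteryEU_single_one (v : C → ℝ) (c : C) : lotteryEU v (Finsupp.single c 1) = v c := by
  simp [lotteryEU]

theorem isLottery_single_one (c : C) : IsLottery (Finsupp.single c (1 : ℝ)) :=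
  ⟨(Finsupp.single_nonneg.2 zero_le_one : (0 : C →₀ ℝ) ≤ Finsupp.single c 1), by simp⟩

theorem isLottery_iff {p : C →₀ ℝ} :
    IsLottery p ↔ 0 ≤ p ∧ Finsupp.linearCombination ℝ (fun _ ↦ (1 : ℝ)) p = 1 := by
  simp [IsLottery, Finsupp.linearCombination_apply, Finsupp.le_def]

theorem convex_setOf_isLottery : Convex ℝ {p : C →₀ ℝ | IsLottery p} := by
  intro p hp q hq s t hs ht hst
  obtain ⟨hp0, hp1⟩ := isLottery_iff.1 hp
  obtain ⟨hq0, hq1⟩ := isLottery_iff.1 hq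
  refine isLottery_iff.2 ⟨add_nonneg (smul_nonneg hs hp0) (smul_nonneg ht hq0), ?_⟩
  simp only [map_add, map_smul, hp1, hq1, smul_eq_mul, mul_one, hst]

theorem IsLottery.lotteryEU_mem {p : C →₀ ℝ} (hp : IsLottery p) {s : Set ℝ} (hs : Convex ℝ s)
    {v : C → ℝ} (hv : ∀ c, v c ∈ s) : lotteryEU v p ∈ s :=
  hs.sum_mem (fun c _ ↦ hp.1 c) hp.2 fun c _ ↦ hv c

variable [Fintype ι]

theorem LotteryPareto.of_forall_abs_sub_le {ε b : ℝ} {v₀ : C → ℝ} {v : ι → C → ℝ} {a : ι → ℝ}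
    (ha : ∀ i, 0 ≤ a i) (hab : ∀ c, |v₀ c - ((∑ i, a i * v i c) + b)| ≤ ε / 2) :
    LotteryPareto ε v₀ v := by
  intro p q hp hq hpq
  let r : C → ℝ := v₀ - ∑ i, a i • v i
  have hr (x : C →₀ ℝ) : lotteryEU r x = lotteryEU v₀ x - ∑ i, a i * lotteryEU (v i) x := by
    simp only [lotteryEU_eq_bilinearCombination, r, map_sub, map_sum, map_smul,
      LinearMap.sub_apply, LinearMap.sum_apply, LinearMap.smul_apply, smul_eq_mul]
  have hr_mem (c : C) : r c ∈ Set.Icc (b - ε / 2) (b + ε / 2) := by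
    have := abs_le.1 (hab c)
    simp only [r, Pi.sub_apply, Finset.sum_apply, Pi.smul_apply, smul_eq_mul]
    exact ⟨by linarith, by linarith⟩
  have hp_mem := hp.lotteryEU_mem (convex_Icc _ _) hr_mem
  have hq_mem := hq.lotteryEU_mem (convex_Icc _ _) hr_mem
  have hsum : ∑ i, a i * lotteryEU (v i) q ≤ ∑ i, a i * lotteryEU (v i) p :=
    Finset.sum_le_sum fun i _ ↦ mul_le_mul_of_nonneg_left (hpq i) (ha i)
  linarith [hr p, hr q, hp_mem.1, hq_mem.2]

theorem LotteryPareto.exists_forall_abs_sub_le {ε : ℝ} {v₀ : C → ℝ} {v : ι → C → ℝ}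
    (h : LotteryPareto ε v₀ v) {c₁ c₂ : C} (hc : ∀ i, v i c₁ < v i c₂) :
    ∃ (a : ι → ℝ) (b : ℝ), (∀ i, 0 ≤ a i) ∧
      ∀ c, |v₀ c - ((∑ i, a i * v i c) + b)| ≤ ε / 2 := by
  let T : (C →₀ ℝ) →ₗ[ℝ] ℝ × (ι → ℝ) :=
    (-Finsupp.bilinearCombination ℝ ℝ v₀).prod
      (LinearMap.pi fun i ↦ Finsupp.bilinearCombination ℝ ℝ (v i))
  let L : Set (C →₀ ℝ) := {p | IsLottery p}
  have hTsub (p q : C →₀ ℝ) : T (p - q) =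
      (lotteryEU v₀ q - lotteryEU v₀ p, fun i ↦ lotteryEU (v i) p - lotteryEU (v i) q) := by
    simp [T, lotteryEU_eq_bilinearCombination, Prod.ext_iff, funext_iff]
  have hTsingle (c d : C) : T (Finsupp.single c 1 - Finsupp.single d 1) =
      (v₀ d - v₀ c, fun i ↦ v i c - v i d) := by
    simp only [hTsub, lotteryEU_single_one]
  have hmem (c d : C) : T (Finsupp.single c 1 - Finsupp.single d 1) ∈ T '' (L - L) :=
    ⟨_, Set.sub_mem_sub (isLottery_single_one c) (isLottery_single_one d), rfl⟩
  obtain ⟨a, ha, hle⟩ := exists_nonneg_forall_add_sum_le (ε := ε)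
    ((convex_setOf_isLottery.sub convex_setOf_isLottery).linear_image T)
    ⟨_, hmem c₂ c₁, fun i ↦ by simpa only [hTsingle, sub_pos] using hc i⟩ <| by
      rintro _ ⟨_, ⟨p, hp, q, hq, rfl⟩, rfl⟩ hpq
      simp only [hTsub, sub_nonneg] at hpq ⊢
      linarith [h p q hp hq hpq]
  obtain ⟨b, hb⟩ := exists_forall_abs_sub_le_iff (r := fun c ↦ v₀ c - ∑ i, a i * v i c) |>.2
    fun d c ↦ by
      have := hle _ (hmem c d)
      simp only [hTsingle, mul_sub, Finset.sum_sub_distrib] at this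
      linarith
  exact ⟨a, b, ha, fun c ↦ by simpa only [sub_sub] using hb c⟩

theorem lotteryPareto_iff {ε : ℝ} {v₀ : C → ℝ} {v : ι → C → ℝ} {c₁ c₂ : C}
    (hc : ∀ i, v i c₁ < v i c₂) :
    LotteryPareto ε v₀ v ↔ ∃ (a : ι → ℝ) (b : ℝ), (∀ i, 0 ≤ a i) ∧
      ∀ c, |v₀ c - ((∑ i, a i * v i c) + b)| ≤ ε / 2 :=
  ⟨fun h ↦ h.exists_forall_abs_sub_le hc,
    fun ⟨_, _, ha, hab⟩ ↦ LotteryPareto.of_forall_abs_sub_le ha hab⟩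

end Lotteries

section ExtremePoints

theorem eq_zero_of_mem_extremePoints_of_add_mem_of_sub_mem {E : Type*} [AddCommGroup E]
    [Module ℝ E] {K : Set E} {x y : E} (hx : x ∈ K.extremePoints ℝ) (hadd : x + y ∈ K)
    (hsub : x - y ∈ K) : y = 0 := by
  have hseg : x ∈ openSegment ℝ (x + y) (x - y) :=
    ⟨2⁻¹, 2⁻¹, by norm_num, by norm_num, by norm_num, by module⟩
  simpa using hx.2 hadd hsub hseg

theorem extremePoints_nonempty_of_isClosed_of_isBounded {H : Type*} [NormedAddCommGroup H]
    [InnerProductSpace ℝ H] [CompleteSpace H] {K : Set H} (hconv : Convex ℝ K)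
    (hclosed : IsClosed K) (hbdd : Bornology.IsBounded K) (hne : K.Nonempty) :
    (K.extremePoints ℝ).Nonempty := by
  let Φ : H ≃ₗ[ℝ] WeakDual ℝ H :=
    (InnerProductSpace.toDual ℝ H).toLinearEquiv.trans WeakDual.toStrongDual.symm
  -- The Riesz isomorphism turns every functional on `H` into an evaluation, which is weak-*
  -- continuous; so the convex image of `K` is weak-* closed, and Banach-Alaoglu applies.
  have hΦ : Continuous Φ := WeakDual.continuous_of_continuous_eval fun x ↦ by
    change Continuous fun g ↦ inner ℝ g x
    fun_prop
  have : LocallyConvexSpace ℝ (WeakDual ℝ H) :=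
    inferInstanceAs (LocallyConvexSpace ℝ (WeakBilin (topDualPairing ℝ H)))
  have hclosed' : IsClosed (Φ '' K) := by
    rw [← hclosed.closure_eq, LinearEquiv.image_closure_of_convex hconv Φ
      (fun f ↦ f.continuous.comp hΦ) fun f ↦ ?_]
    · exact isClosed_closure
    · refine (WeakDual.eval_continuous ((InnerProductSpace.toDual ℝ H).symm f)).congr fun φ ↦ ?_
      obtain ⟨g, rfl⟩ := Φ.surjective φ
      change inner ℝ g ((InnerProductSpace.toDual ℝ H).symm f) = f (Φ.symm (Φ g))
      rw [Φ.symm_apply_apply, real_inner_comm, InnerProductSpace.toDual_symm_apply]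
  have hcompact : IsCompact (Φ '' K) := by
    refine WeakDual.isCompact_of_bounded_of_closed ?_ hclosed'
    exact (InnerProductSpace.toDual ℝ H).lipschitz.isBounded_image hbdd
  have := hcompact.extremePoints_nonempty (hne.image Φ)
  rwa [← image_extremePoints, Set.image_nonempty] at this

end ExtremePoints

section Nonatomic

open scoped Function

variable {S : Type*} [MeasurableSpace S] {ν : Measure S}

theorem Nonatomic.finset_sum {ι : Type*} {μ : ι → Measure S} [∀ i, IsFiniteMeasure (μ i)]
    {s : Finset ι} (h : ∀ i ∈ s, Nonatomic (μ i)) : Nonatomic (∑ i ∈ s, μ i) := by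
  intro E hE hpos
  obtain ⟨i, hi, hiE⟩ : ∃ i ∈ s, 0 < μ i E := by
    rw [Measure.finsetSum_apply] at hpos
    simpa only [pos_iff_ne_zero] using Finset.exists_ne_zero_of_sum_ne_zero hpos.ne'
  obtain ⟨F, hFE, hF, hF0, hFlt⟩ := h i hi E hE hiE
  have hle : μ i ≤ ∑ j ∈ s, μ j := Finset.single_le_sum (fun _ _ ↦ Measure.zero_le _) hi
  refine ⟨F, hFE, hF, hF0.trans_le (hle F), ?_⟩
  have hdiff : 0 < (∑ j ∈ s, μ j) (E \ F) :=
    ((tsub_pos_of_lt hFlt).trans_le le_measure_sdiff).trans_le (hle _)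
  calc (∑ j ∈ s, μ j) F < (∑ j ∈ s, μ j) F + (∑ j ∈ s, μ j) (E \ F) :=
        ENNReal.lt_add_right (measure_ne_top _ F) hdiff.ne'
    _ = (∑ j ∈ s, μ j) E := by
        rw [measure_add_sdiff hF.nullMeasurableSet, Set.union_eq_right.2 hFE]

theorem Nonatomic.exists_pairwise_disjoint (hν : Nonatomic ν) (n : ℕ) {E : Set S}
    (hE : MeasurableSet E) (hpos : 0 < ν E) :
    ∃ A : Fin n → Set S, (∀ k, MeasurableSet (A k) ∧ A k ⊆ E ∧ 0 < ν (A k)) ∧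
      Pairwise (Disjoint on A) := by
  induction n generalizing E with
  | zero => exact ⟨Fin.elim0, fun k ↦ k.elim0, fun k ↦ k.elim0⟩
  | succ n ih =>
    obtain ⟨F, hFE, hF, hF0, hFlt⟩ := hν E hE hpos
    obtain ⟨A, hA, hdisj⟩ := ih (hE.diff hF) ((tsub_pos_of_lt hFlt).trans_le le_measure_sdiff)
    have hFA (k : Fin n) : Disjoint F (A k) := Set.disjoint_sdiff_right.mono_right (hA k).2.1
    refine ⟨Fin.cons F A, fun k ↦ ?_, fun j k hjk ↦ ?_⟩
    · cases k using Fin.cases with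
      | zero => exact ⟨hF, hFE, hF0⟩
      | succ k => exact ⟨(hA k).1, (hA k).2.1.trans Set.sdiff_subset, (hA k).2.2⟩
    · cases j using Fin.cases <;> cases k using Fin.cases
      · exact absurd rfl hjk
      · exact hFA _
      · exact (hFA _).symm
      · exact hdisj fun h ↦ hjk (congrArg Fin.succ h)

variable [IsFiniteMeasure ν]

theorem abs_sum_smul_indicatorConstLp_le {κ : Type*} [Fintype κ] {p : ENNReal} {A : κ → Set S}
    (hA : ∀ k, MeasurableSet (A k)) {E : Set S} (hAE : ∀ k, A k ⊆ E) (c : κ → ℝ) :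
    ∀ᵐ x ∂ν, |(∑ k, c k • indicatorConstLp p (hA k) (measure_ne_top ν _) (1 : ℝ) : Lp ℝ p ν) x| ≤
      (∑ k, |c k|) * E.indicator 1 x := by
  have hsmul (k : κ) := Lp.coeFn_smul (c k)
    (indicatorConstLp p (hA k) (measure_ne_top ν _) (1 : ℝ))
  have hind (k : κ) := indicatorConstLp_coeFn (p := p) (hs := hA k)
    (hμs := measure_ne_top ν (A k)) (c := (1 : ℝ))
  have hsum := Lp.coeFn_finsetSum (s := Finset.univ)
    fun k ↦ c k • indicatorConstLp p (hA k) (measure_ne_top ν _) (1 : ℝ)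
  filter_upwards [hsum, ae_all_iff.2 hsmul, ae_all_iff.2 hind] with x hsum hsmul hind
  rw [hsum, Finset.sum_apply, Finset.sum_mul]
  refine (Finset.abs_sum_le_sum_abs _ _).trans (Finset.sum_le_sum fun k _ ↦ ?_)
  rw [hsmul, Pi.smul_apply, hind, smul_eq_mul, abs_mul,
    abs_of_nonneg (Set.indicator_nonneg (fun _ _ ↦ zero_le_one) x)]
  gcongr
  exact Set.indicator_le_indicator_of_subset (hAE k) (fun _ ↦ zero_le_one) x

theorem linearIndependent_indicatorConstLp {κ : Type*} {A : κ → Set S}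
    (hA : ∀ k, MeasurableSet (A k)) (hpos : ∀ k, 0 < ν (A k)) (hdisj : Pairwise (Disjoint on A)) :
    LinearIndependent ℝ fun k ↦ indicatorConstLp 2 (hA k) (measure_ne_top ν _) (1 : ℝ) := by
  refine linearIndependent_of_ne_zero_of_inner_eq_zero (𝕜 := ℝ) (fun k ↦ ?_) fun j k hjk ↦ ?_
  · rw [← norm_ne_zero_iff, norm_indicatorConstLp' two_ne_zero (hpos k).ne', norm_one, one_mul]
    exact (Real.rpow_pos_of_pos (ENNReal.toReal_pos (hpos k).ne' (measure_ne_top _ _)) _).ne'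
  · beta_reduce
    rw [L2.real_inner_indicatorConstLp_one_indicatorConstLp_one, (hdisj hjk).inter_eq,
      measureReal_empty]

theorem Nonatomic.exists_ne_zero_map_eq_zero (hν : Nonatomic ν) {W : Type*} [AddCommGroup W]
    [Module ℝ W] [FiniteDimensional ℝ W] (T : Lp ℝ 2 ν →ₗ[ℝ] W) {E : Set S}
    (hE : MeasurableSet E) (hpos : 0 < ν E) :
    ∃ h : Lp ℝ 2 ν, h ≠ 0 ∧ T h = 0 ∧ ∀ᵐ x ∂ν, |h x| ≤ E.indicator 1 x := by
  obtain ⟨A, hA, hdisj⟩ := hν.exists_pairwise_disjoint (Module.finrank ℝ W + 1) hE hpos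
  choose hAm hAE hApos using hA
  let u (k : Fin (Module.finrank ℝ W + 1)) : Lp ℝ 2 ν :=
    indicatorConstLp 2 (hAm k) (measure_ne_top ν _) 1
  have hu : LinearIndependent ℝ u := linearIndependent_indicatorConstLp hAm hApos hdisj
  have hTu : ¬LinearIndependent ℝ (T ∘ u) := fun hli ↦ by
    simpa using hli.fintype_card_le_finrank
  obtain ⟨c, hc, k₀, hk₀⟩ := Fintype.not_linearIndependent_iff.1 hTu
  let M := ∑ k, |c k|
  have hM : 0 < M :=
    Finset.sum_pos' (fun k _ ↦ abs_nonneg (c k)) ⟨k₀, Finset.mem_univ k₀, abs_pos.2 hk₀⟩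
  refine ⟨M⁻¹ • ∑ k, c k • u k, smul_ne_zero (inv_ne_zero hM.ne') fun h0 ↦ ?_, ?_, ?_⟩
  · exact hk₀ (Fintype.linearIndependent_iff.1 hu c h0 k₀)
  · simpa using Or.inr hc
  · filter_upwards [Lp.coeFn_smul M⁻¹ (∑ k, c k • u k),
      abs_sum_smul_indicatorConstLp_le hAm hAE c] with x hsmul hle
    rw [hsmul, Pi.smul_apply, smul_eq_mul, abs_mul, abs_of_pos (inv_pos.2 hM),
      inv_mul_le_iff₀ hM]
    exact hle

end Nonatomic

section Lyapunov

variable {S : Type*} [MeasurableSpace S] {ν : Measure S}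

/-- The functions in `L²(ν)` with values in `[0, 1]`: the convex relaxation of the set of events, an
event being encoded by its indicator function. The space `L²` is used so that this set is compact
for the weak topology of a Hilbert space. -/
def fuzzyEvents (ν : Measure S) : Set (Lp ℝ 2 ν) :=
  {g | ∀ᵐ x ∂ν, g x ∈ Set.Icc (0 : ℝ) 1}

theorem convex_fuzzyEvents : Convex ℝ (fuzzyEvents ν) := by
  intro f hf g hg s t hs ht hst
  filter_upwards [hf, hg, Lp.coeFn_add (s • f) (t • g), Lp.coeFn_smul s f, Lp.coeFn_smul t g]
    with x hf hg hadd hsf htg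
  rw [hadd, Pi.add_apply, hsf, htg]
  exact convex_Icc 0 1 hf hg hs ht hst

theorem exists_pos_measure_mem_Icc {g : S → ℝ} (hg : ∀ᵐ x ∂ν, g x ∈ Set.Icc (0 : ℝ) 1)
    (hne : ¬∀ᵐ x ∂ν, g x = 0 ∨ g x = 1) :
    ∃ δ > 0, 0 < ν {x | g x ∈ Set.Icc δ (1 - δ)} := by
  by_contra! hnull
  refine hne ?_
  have hnull' (n : ℕ) : ∀ᵐ x ∂ν, g x ∉ Set.Icc (1 / (n + 1 : ℝ)) (1 - 1 / (n + 1)) :=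
    measure_eq_zero_iff_ae_notMem.1 (nonpos_iff_eq_zero.1 (hnull _ Nat.one_div_pos_of_nat))
  filter_upwards [hg, ae_all_iff.2 hnull'] with x hx hxn
  by_contra! hx01
  have hpos : 0 < min (g x) (1 - g x) :=
    lt_min (hx.1.lt_of_ne' hx01.1) (sub_pos.2 (hx.2.lt_of_ne hx01.2))
  obtain ⟨n, hn⟩ := exists_nat_one_div_lt hpos
  obtain ⟨hn₀, hn₁⟩ := lt_min_iff.1 hn
  exact hxn n ⟨hn₀.le, by linarith⟩

theorem add_smul_mem_fuzzyEvents {g h : Lp ℝ 2 ν} (hg : g ∈ fuzzyEvents ν) {δ r : ℝ}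
    (hr : |r| ≤ δ) (hh : ∀ᵐ x ∂ν, |h x| ≤ {x | g x ∈ Set.Icc δ (1 - δ)}.indicator 1 x) :
    g + r • h ∈ fuzzyEvents ν := by
  filter_upwards [hg, hh, Lp.coeFn_add g (r • h), Lp.coeFn_smul r h] with x hg hh hadd hsmul
  rw [hadd, Pi.add_apply, hsmul, Pi.smul_apply, smul_eq_mul]
  by_cases hx : x ∈ {x | g x ∈ Set.Icc δ (1 - δ)}
  · rw [Set.indicator_of_mem hx, Pi.one_apply] at hh
    have hrh : |r * h x| ≤ δ := by
      rw [abs_mul]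
      exact (mul_le_of_le_one_right (abs_nonneg r) hh).trans hr
    obtain ⟨hlo, hhi⟩ := abs_le.1 hrh
    exact ⟨by linarith [hx.1], by linarith [hx.2]⟩
  · rw [Set.indicator_of_notMem hx, abs_nonpos_iff] at hh
    rwa [hh, mul_zero, add_zero]

variable [IsFiniteMeasure ν]

theorem fuzzyEvents_eq_Icc : fuzzyEvents ν = Set.Icc 0 (Lp.const 2 ν 1) := by
  ext g
  simp only [fuzzyEvents, Set.mem_Icc, Set.mem_ofPred_eq, Filter.eventually_and, ← Lp.coeFn_le]
  refine and_congr (Filter.eventually_congr ?_) (Filter.eventually_congr ?_)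
  · filter_upwards [Lp.coeFn_zero ℝ 2 ν] with x hx
    rw [hx, Pi.zero_apply]
  · filter_upwards [Lp.coeFn_const (p := 2) (μ := ν) (1 : ℝ)] with x hx
    rw [hx, Function.const_apply]

theorem indicatorConstLp_mem_fuzzyEvents {E : Set S} (hE : MeasurableSet E) :
    indicatorConstLp 2 hE (measure_ne_top ν E) 1 ∈ fuzzyEvents ν := by
  filter_upwards [indicatorConstLp_coeFn (p := 2) (hs := hE) (hμs := measure_ne_top ν E)
    (c := (1 : ℝ))] with x hx
  rw [hx]
  by_cases hxE : x ∈ E <;> simp [hxE]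

theorem isClosed_fuzzyEvents : IsClosed (fuzzyEvents ν) :=
  fuzzyEvents_eq_Icc (ν := ν) ▸ isClosed_Icc

theorem isBounded_fuzzyEvents : Bornology.IsBounded (fuzzyEvents ν) := by
  refine isBounded_iff_forall_norm_le.2 ⟨‖Lp.const 2 ν (1 : ℝ)‖, fun g hg ↦ ?_⟩
  rw [fuzzyEvents_eq_Icc] at hg
  exact norm_le_norm_of_abs_le_abs (abs_le_abs_of_nonneg hg.1 hg.2)

theorem Nonatomic.ae_eq_zero_or_one_of_mem_extremePoints (hν : Nonatomic ν) {W : Type*}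
    [AddCommGroup W] [Module ℝ W] [FiniteDimensional ℝ W] (T : Lp ℝ 2 ν →ₗ[ℝ] W) {w : W}
    {g : Lp ℝ 2 ν} (hg : g ∈ (fuzzyEvents ν ∩ T ⁻¹' {w}).extremePoints ℝ) :
    ∀ᵐ x ∂ν, g x = 0 ∨ g x = 1 := by
  by_contra hne
  obtain ⟨hg01, hgw⟩ := hg.1
  obtain ⟨δ, hδ, hpos⟩ := exists_pos_measure_mem_Icc hg01 hne
  have hB : MeasurableSet {x | g x ∈ Set.Icc δ (1 - δ)} :=
    (Lp.stronglyMeasurable g).measurable measurableSet_Icc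
  obtain ⟨h, hh0, hTh, hh⟩ := hν.exists_ne_zero_map_eq_zero T hB hpos
  have hmem {r : ℝ} (hr : |r| ≤ δ) : g + r • h ∈ fuzzyEvents ν ∩ T ⁻¹' {w} :=
    ⟨add_smul_mem_fuzzyEvents hg01 hr hh, by
      rwa [Set.mem_preimage, map_add, map_smul, hTh, smul_zero, add_zero]⟩
  have hsub : g - δ • h ∈ fuzzyEvents ν ∩ T ⁻¹' {w} := by
    rw [sub_eq_add_neg, ← neg_smul]
    exact hmem (by rw [abs_neg, abs_of_pos hδ])
  have hzero := eq_zero_of_mem_extremePoints_of_add_mem_of_sub_mem hg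
    (hmem (abs_of_pos hδ).le) hsub
  exact smul_ne_zero hδ.ne' hh0 hzero

theorem exists_eq_indicatorConstLp_of_ae_eq_zero_or_one {g : Lp ℝ 2 ν}
    (hg : ∀ᵐ x ∂ν, g x = 0 ∨ g x = 1) :
    ∃ (E : Set S) (hE : MeasurableSet E), g = indicatorConstLp 2 hE (measure_ne_top ν E) 1 := by
  have hE : MeasurableSet (g ⁻¹' {1}) :=
    (Lp.stronglyMeasurable g).measurable (measurableSet_singleton 1)
  refine ⟨g ⁻¹' {1}, hE, Lp.ext ?_⟩
  filter_upwards [hg, indicatorConstLp_coeFn (p := 2) (hs := hE)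
    (hμs := measure_ne_top ν (g ⁻¹' {1})) (c := (1 : ℝ))] with x hx hind
  rw [hind]
  rcases hx with hx | hx <;> simp [Set.indicator, hx]

theorem Nonatomic.exists_map_indicatorConstLp_eq (hν : Nonatomic ν) {W : Type*}
    [NormedAddCommGroup W] [NormedSpace ℝ W] [FiniteDimensional ℝ W] (T : Lp ℝ 2 ν →L[ℝ] W)
    {g : Lp ℝ 2 ν} (hg : g ∈ fuzzyEvents ν) :
    ∃ (E : Set S) (hE : MeasurableSet E),
      T (indicatorConstLp 2 hE (measure_ne_top ν E) 1) = T g := by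
  obtain ⟨e, he⟩ := extremePoints_nonempty_of_isClosed_of_isBounded
    (convex_fuzzyEvents.inter ((convex_singleton (T g)).linear_preimage (T : Lp ℝ 2 ν →ₗ[ℝ] W)))
    (isClosed_fuzzyEvents.inter (isClosed_singleton.preimage T.continuous))
    (isBounded_fuzzyEvents.subset Set.inter_subset_left) ⟨g, hg, rfl⟩
  obtain ⟨E, hE, rfl⟩ := exists_eq_indicatorConstLp_of_ae_eq_zero_or_one
    (hν.ae_eq_zero_or_one_of_mem_extremePoints (T : Lp ℝ 2 ν →ₗ[ℝ] W) he)
  exact ⟨E, hE, he.1.2⟩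

theorem exists_strongDual_indicatorConstLp_eq_measureReal {μ : Measure S} [IsFiniteMeasure μ]
    (hμν : μ ≤ ν) :
    ∃ φ : StrongDual ℝ (Lp ℝ 2 ν), ∀ (E : Set S) (hE : MeasurableSet E),
      φ (indicatorConstLp 2 hE (measure_ne_top ν E) 1) = μ.real E := by
  have hmem : MemLp (fun x ↦ (μ.rnDeriv ν x).toReal) 2 ν := by
    refine .of_bound (Measure.measurable_rnDeriv _ _).ennreal_toReal.aestronglyMeasurable 1 ?_
    filter_upwards [Measure.rnDeriv_le_one_of_le hμν] with x hx
    rw [Real.norm_of_nonneg ENNReal.toReal_nonneg]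
    exact ENNReal.toReal_le_of_le_ofReal zero_le_one (by simpa using hx)
  let f : Lp ℝ 2 ν := hmem.toLp
  refine ⟨innerSL ℝ f, fun E hE ↦ ?_⟩
  calc inner ℝ f (indicatorConstLp 2 hE (measure_ne_top ν E) 1)
      = ∫ x in E, f x ∂ν := by rw [real_inner_comm, L2.inner_indicatorConstLp_one]
    _ = ∫ x in E, (μ.rnDeriv ν x).toReal ∂ν :=
        setIntegral_congr_ae hE (hmem.coeFn_toLp.mono fun _ hx _ ↦ hx)
    _ = μ.real E :=
        Measure.setIntegral_toReal_rnDeriv (Measure.absolutelyContinuous_of_le hμν) E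

variable {ι : Type*} [Finite ι]

theorem convex_image_measureReal {μ : ι → Measure S} [∀ i, IsFiniteMeasure (μ i)]
    (hμ : ∀ i, Nonatomic (μ i)) :
    Convex ℝ ((fun E i ↦ (μ i).real E) '' {E : Set S | MeasurableSet E}) := by
  have := Fintype.ofFinite ι
  have hle (i : ι) : μ i ≤ ∑ j, μ j :=
    Finset.single_le_sum (fun _ _ ↦ Measure.zero_le _) (Finset.mem_univ i)
  choose φ hφ using fun i ↦ exists_strongDual_indicatorConstLp_eq_measureReal (hle i)
  let T : Lp ℝ 2 (∑ j, μ j) →L[ℝ] ι → ℝ := ContinuousLinearMap.pi φ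
  suffices heq : (fun E i ↦ (μ i).real E) '' {E : Set S | MeasurableSet E} = T '' fuzzyEvents _ by
    rw [heq]
    exact convex_fuzzyEvents.linear_image (T : Lp ℝ 2 (∑ j, μ j) →ₗ[ℝ] ι → ℝ)
  ext y
  constructor
  · rintro ⟨E, hE, rfl⟩
    exact ⟨_, indicatorConstLp_mem_fuzzyEvents hE, funext fun i ↦ hφ i E hE⟩
  · rintro ⟨g, hg, rfl⟩
    obtain ⟨E, hE, hTE⟩ := (Nonatomic.finset_sum fun i _ ↦ hμ i).exists_map_indicatorConstLp_eq T hg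
    exact ⟨E, hE, hTE ▸ funext fun i ↦ (hφ i E hE).symm⟩

theorem exists_measurableSet_forall_measureReal_eq {μ : ι → Measure S}
    [∀ i, IsProbabilityMeasure (μ i)] (hμ : ∀ i, Nonatomic (μ i)) {t : ℝ} (ht : t ∈ Set.Icc 0 1) :
    ∃ F, MeasurableSet F ∧ ∀ i, (μ i).real F = t := by
  obtain ⟨F, hF, hFt⟩ := convex_image_measureReal hμ ⟨∅, .empty, rfl⟩ ⟨Set.univ, .univ, rfl⟩
    (sub_nonneg.2 ht.2) ht.1 (sub_add_cancel 1 t)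
  exact ⟨F, hF, fun i ↦ by simpa using congrFun hFt i⟩

theorem convex_image_measureReal_sub {μ₀ : Measure S} {μ : ι → Measure S} [IsFiniteMeasure μ₀]
    [∀ i, IsFiniteMeasure (μ i)] (hμ₀ : Nonatomic μ₀) (hμ : ∀ i, Nonatomic (μ i)) :
    Convex ℝ ((fun E i ↦ (μ i).real E - μ₀.real E) '' {E : Set S | MeasurableSet E}) := by
  let Q : Option ι → Measure S := fun o ↦ o.elim μ₀ μ
  have (o : Option ι) : IsFiniteMeasure (Q o) := o.rec ‹_› ‹_›
  have hQ (o : Option ι) : Nonatomic (Q o) := o.rec hμ₀ hμ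
  let D : (Option ι → ℝ) →ₗ[ℝ] ι → ℝ :=
    LinearMap.funLeft ℝ ℝ some - LinearMap.funLeft ℝ ℝ fun _ ↦ none
  have hD := (convex_image_measureReal hQ).linear_image D
  rw [Set.image_image] at hD
  exact hD

end Lyapunov

section Beliefs

variable {S ι : Type*} [MeasurableSpace S] {P₀ : Measure S} {P : ι → Measure S} {δ : ℝ}

/-- The `δ`-Likelihood Dominance condition between a social belief `P₀` and the individual beliefs
`P i`: if everybody finds `E` at least as likely as an event `F` on whose probability all beliefs
agree, then so does `P₀`, up to `δ`. -/
def LikelihoodDominance (δ : ℝ) (P₀ : Measure S) (P : ι → Measure S) : Prop :=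
  ∀ E F : Set S, MeasurableSet E → MeasurableSet F → (∀ i, P i F = P₀ F) →
    (∀ i, P i F ≤ P i E) → (P₀ F).toReal - δ ≤ (P₀ E).toReal

theorem LikelihoodDominance.exists_measureReal_sub_le [Finite ι] [Nonempty ι]
    [IsProbabilityMeasure P₀] [∀ i, IsProbabilityMeasure (P i)]
    (hP₀ : Nonatomic P₀) (hP : ∀ i, Nonatomic (P i)) (h : LikelihoodDominance δ P₀ P)
    {E : Set S} (hE : MeasurableSet E) :
    ∃ i, (P i).real E - P₀.real E ≤ δ := by
  obtain ⟨i, hi⟩ := Finite.exists_min fun j ↦ (P j).real E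
  let Q : Option ι → Measure S := fun o ↦ o.elim P₀ P
  have (o : Option ι) : IsProbabilityMeasure (Q o) := o.rec ‹_› ‹_›
  have hQ (o : Option ι) : Nonatomic (Q o) := o.rec hP₀ hP
  obtain ⟨F, hF, hQF⟩ := exists_measurableSet_forall_measureReal_eq hQ
    (t := (P i).real E) ⟨measureReal_nonneg, measureReal_le_one⟩
  have hP₀F : P₀.real F = (P i).real E := hQF none
  have hPF (j : ι) : (P j).real F = (P i).real E := hQF (some j)
  have hle : P₀.real F - δ ≤ P₀.real E := h E F hE hF
    (fun j ↦ (measureReal_eq_measureReal_iff).1 ((hPF j).trans hP₀F.symm))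
    (fun j ↦ (ENNReal.toReal_le_toReal (measure_ne_top _ _) (measure_ne_top _ _)).1
      ((hPF j).trans_le (hi j)))
  exact ⟨i, by linarith⟩

variable [Fintype ι]

theorem LikelihoodDominance.of_forall_sum_mul_sub_le [∀ i, IsFiniteMeasure (P i)] {l : ι → ℝ}
    (hl : l ∈ stdSimplex ℝ ι)
    (h : ∀ E, MeasurableSet E → ∑ i, l i * (P i).real E - P₀.real E ≤ δ) :
    LikelihoodDominance δ P₀ P := by
  intro E F hE _ hF hFE
  have hle : P₀.real F ≤ ∑ i, l i * (P i).real E :=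
    calc P₀.real F = ∑ i, l i * (P i).real F := by
          simp only [measureReal_def, hF, ← Finset.sum_mul, hl.2, one_mul]
      _ ≤ ∑ i, l i * (P i).real E := Finset.sum_le_sum fun i _ ↦
          mul_le_mul_of_nonneg_left (ENNReal.toReal_mono (measure_ne_top _ _) (hFE i)) (hl.1 i)
  change P₀.real F - δ ≤ P₀.real E
  linarith [h E hE]

theorem likelihoodDominance_iff [Nonempty ι] [IsProbabilityMeasure P₀]
    [∀ i, IsProbabilityMeasure (P i)] (hP₀ : Nonatomic P₀) (hP : ∀ i, Nonatomic (P i)) :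
    LikelihoodDominance δ P₀ P ↔ ∃ l ∈ stdSimplex ℝ ι,
      ∀ E, MeasurableSet E → ∑ i, l i * (P i).real E - P₀.real E ≤ δ := by
  refine ⟨fun h ↦ ?_, fun ⟨l, hl, hle⟩ ↦ .of_forall_sum_mul_sub_le hl hle⟩
  obtain ⟨l, hl, hle⟩ := exists_mem_stdSimplex_forall_sum_le
    (convex_image_measureReal_sub hP₀ hP) (fun _ ↦ δ) <|
      Set.forall_mem_image.2 fun E hE ↦ h.exists_measureReal_sub_le hP₀ hP hE
  refine ⟨l, hl, fun E hE ↦ ?_⟩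
  simpa only [mul_sub, Finset.sum_sub_distrib, ← Finset.sum_mul, hl.2, one_mul] using
    hle _ ⟨E, hE, rfl⟩

end Beliefs

section TotalVariation

variable {S : Type*} [MeasurableSpace S]

theorem totalVariation_univ_le_iff {R : SignedMeasure S} (hR : R Set.univ = 0) {e : ℝ}
    (he : 0 ≤ e) :
    R.totalVariation Set.univ ≤ ENNReal.ofReal e ↔ ∀ E, MeasurableSet E → -(e / 2) ≤ R E := by
  let J := R.toJordanDecomposition
  have hJ {E : Set S} (hE : MeasurableSet E) : R E = J.posPart.real E - J.negPart.real E :=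
    R.apply_eq_posPart_real_sub_negPart_real hE
  have htv : R.totalVariation Set.univ = ENNReal.ofReal (2 * J.negPart.real Set.univ) := by
    have hpos : J.posPart.real Set.univ = J.negPart.real Set.univ :=
      sub_eq_zero.1 ((hJ .univ).symm.trans hR)
    rw [SignedMeasure.totalVariation, Measure.add_apply, ← ofReal_measureReal,
      ← ofReal_measureReal, ← ENNReal.ofReal_add measureReal_nonneg measureReal_nonneg,
      hpos, two_mul]
  rw [htv, ENNReal.ofReal_le_ofReal_iff he]
  refine ⟨fun h E hE ↦ ?_, fun h ↦ ?_⟩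
  · have hmono : J.negPart.real E ≤ J.negPart.real Set.univ := measureReal_mono (Set.subset_univ _)
    have hnonneg : 0 ≤ J.posPart.real E := measureReal_nonneg
    linarith [hJ hE]
  · obtain ⟨A, hA, _, hA', _, hneg⟩ := R.toJordanDecomposition_spec
    have hJA : J.negPart.real Set.univ = -R Aᶜ := by
      rw [hneg, SignedMeasure.toMeasureOfLEZero_real_apply _ _ _ .univ, Set.inter_univ]
    linarith [h Aᶜ hA.compl]

theorem toSignedMeasure_sub_sum_smul_apply {ι : Type*} [Fintype ι] (μ : Measure S)
    [IsFiniteMeasure μ] (P : ι → Measure S) [∀ i, IsFiniteMeasure (P i)] (l : ι → ℝ) {E : Set S}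
    (hE : MeasurableSet E) :
    (μ.toSignedMeasure - ∑ i, l i • (P i).toSignedMeasure) E =
      μ.real E - ∑ i, l i * (P i).real E := by
  simp only [sub_apply, sum_apply, smul_apply, Measure.toSignedMeasure_apply_measurable hE,
    smul_eq_mul]

theorem totalVariation_sub_sum_smul_le_iff {ι : Type*} [Fintype ι] {P₀ : Measure S}
    [IsProbabilityMeasure P₀] {P : ι → Measure S} [∀ i, IsProbabilityMeasure (P i)] {l : ι → ℝ}
    (hl : ∑ i, l i = 1) {e : ℝ} (he : 0 ≤ e) :
    (P₀.toSignedMeasure - ∑ i, l i • (P i).toSignedMeasure).totalVariation Set.univ ≤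
      ENNReal.ofReal e ↔ ∀ E, MeasurableSet E → ∑ i, l i * (P i).real E - P₀.real E ≤ e / 2 := by
  rw [totalVariation_univ_le_iff _ he]
  · refine forall₂_congr fun E hE ↦ ?_
    rw [toSignedMeasure_sub_sum_smul_apply P₀ P l hE, neg_le, neg_sub]
  · simp [toSignedMeasure_sub_sum_smul_apply P₀ P l .univ, hl]

end TotalVariation

theorem stmt12_general {S C ι : Type*} [MeasurableSpace S] [Fintype ι] [Nonempty ι] {ε₁ ε₂ : ℝ}
    (hε₂ : 0 ≤ ε₂) (P₀ : Measure S) (P : ι → Measure S) [IsProbabilityMeasure P₀]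
    [∀ i, IsProbabilityMeasure (P i)] (hP₀ : Nonatomic P₀) (hP : ∀ i, Nonatomic (P i))
    (v₀ : C → ℝ) (v : ι → C → ℝ) {c₁ c₂ : C} (hc : ∀ i, v i c₁ < v i c₂) :
    LotteryPareto ε₁ v₀ v ∧ LikelihoodDominance (ε₂ / 2) P₀ P ↔
      ∃ (a : ι → ℝ) (b : ℝ), (∀ i, 0 ≤ a i) ∧
        (∀ c, |v₀ c - ((∑ i, a i * v i c) + b)| ≤ ε₁ / 2) ∧
        ∃ l : ι → ℝ, (∀ i, 0 ≤ l i) ∧ ∑ i, l i = 1 ∧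
          (P₀.toSignedMeasure - ∑ i, l i • (P i).toSignedMeasure).totalVariation Set.univ ≤
            ENNReal.ofReal ε₂ := by
  rw [lotteryPareto_iff hc, likelihoodDominance_iff hP₀ hP]
  constructor
  · rintro ⟨⟨a, b, ha, hab⟩, l, hl, hle⟩
    exact ⟨a, b, ha, hab, l, hl.1, hl.2, (totalVariation_sub_sum_smul_le_iff hl.2 hε₂).2 hle⟩
  · rintro ⟨a, b, ha, hab, l, hl₀, hl₁, htv⟩
    exact ⟨⟨a, b, ha, hab⟩, l, ⟨hl₀, hl₁⟩, (totalVariation_sub_sum_smul_le_iff hl₁ hε₂).1 htv⟩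

/-- Proposition: SEU aggregation of tastes and beliefs.
Let `ε₁ ≥ 0`, `ε₂ ∈ [0,1]`, let `P₀, P₁, …, P_N` be nonatomic probability measures on
`(S, Σ_S)`, let `v₀, v₁, …, v_N : C → ℝ`, and assume there exist `c*, c_* ∈ C`
unanimously strictly ranked.  Then the conjunction of `ε₁`-Lottery Pareto and
`(ε₂/2)`-Likelihood Dominance is equivalent to the existence of `a₁,…,a_N ≥ 0`, `b`,
and weights `λ₁,…,λ_N ≥ 0` summing to `1` such that
`sup_c |v₀(c) − (Σᵢ aᵢ vᵢ(c) + b)| ≤ ε₁/2` and the signed measure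
`R = P₀ − Σᵢ λᵢ Pᵢ` has total variation norm `‖R‖₁ ≤ ε₂`. -/
theorem stmt12 {S : Type*} [MeasurableSpace S] {C : Type*} [Nonempty C]
    {N : ℕ} (hN : 1 ≤ N) {ε₁ ε₂ : ℝ} (hε₁ : 0 ≤ ε₁) (hε₂0 : 0 ≤ ε₂) (hε₂1 : ε₂ ≤ 1)
    (P₀ : Measure S) (P : Fin N → Measure S)
    [IsProbabilityMeasure P₀] [∀ i, IsProbabilityMeasure (P i)]
    (hP₀na : Nonatomic P₀) (hPna : ∀ i, Nonatomic (P i))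
    (v₀ : C → ℝ) (v : Fin N → C → ℝ)
    (cstar cbot : C) (hc₀ : v₀ cbot < v₀ cstar) (hc : ∀ i, v i cbot < v i cstar) :
    -- (i): ε₁-Lottery Pareto and (ε₂/2)-Likelihood Dominance
    ((∀ p q : C →₀ ℝ, IsLottery p → IsLottery q →
        (∀ i, lotteryEU (v i) q ≤ lotteryEU (v i) p) →
        lotteryEU v₀ q - ε₁ ≤ lotteryEU v₀ p) ∧
      (∀ E F : Set S, MeasurableSet E → MeasurableSet F →
        (∀ i, P i F = P₀ F) →
        (∀ i, P i F ≤ P i E) →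
        (P₀ F).toReal - ε₂ / 2 ≤ (P₀ E).toReal)) ↔
    -- (ii): approximate utilitarian aggregation of tastes and linear pooling of beliefs
    (∃ (a : Fin N → ℝ) (b : ℝ), (∀ i, 0 ≤ a i) ∧
        (∀ c, |v₀ c - ((∑ i, a i * v i c) + b)| ≤ ε₁ / 2) ∧
      ∃ l : Fin N → ℝ, (∀ i, 0 ≤ l i) ∧ (∑ i, l i) = 1 ∧
        (P₀.toSignedMeasure - ∑ i, l i • (P i).toSignedMeasure).totalVariation
            Set.univ ≤ ENNReal.ofReal ε₂) := by
  have : Nonempty (Fin N) := ⟨⟨0, hN⟩⟩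
  exact stmt12_general hε₂0 P₀ P hP₀na hPna v₀ v hc
end
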